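/- arXiv:2303.08921 — 2 statements merged into one kernel-verified Lean document; each statement's English description precedes it below -/
import Mathlib

section
/- Let 𝒜 be a complex unital associative algebra, let d, B ∈ 𝒜, let s be a nonzero complex number, and let z ∈ ℂ be such that s^{−1}·d − z·1 is invertible in 𝒜; write R := (s^{−1}·d − z·1)^{−1}. Then for every integer p ≥ 1: R·B = Σ_{r=0}^{p−1} (−1)^r s^{−r} ad_d^r(B)·R^{r+1} + (−1)^p s^{−p} R·ad_d^p(B)·R^p. -/
/-!
With `M = s⁻¹ • d - z • 1`, the scalar part of `M` is central, so `M A - A M = s⁻¹ • [d, A]`.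
Multiplying by `R = M⁻¹` on both sides gives `R A = A R - s⁻¹ • R [d, A] R` (`resolvent_mul`).
Applying this to `A = ad_d^p(B)` in the remainder term splits off the summand of index `p` and
leaves the remainder of order `p + 1`, so the expansion follows by induction on `p`.
-/

/-- Iterated commutator: `adPow Φ k A = ad_Φ^k(A)`, with `ad_Φ(A) = [Φ, A] = ΦA − AΦ`. -/
def adPow {𝒜 : Type*} [Ring 𝒜] (Φ : 𝒜) : ℕ → 𝒜 → 𝒜
  | 0, A => A
  | k + 1, A => Φ * adPow Φ k A - adPow Φ k A * Φ

/-- Moving the resolvent past `A` costs one commutator: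
`R A = A R - s⁻¹ R [d, A] R`. -/
theorem resolvent_mul {𝒜 : Type*} [Ring 𝒜] [Algebra ℂ 𝒜]
    (d A : 𝒜) (s z : ℂ) (R : 𝒜)
    (hR₁ : R * (s⁻¹ • d - z • (1 : 𝒜)) = 1)
    (hR₂ : (s⁻¹ • d - z • (1 : 𝒜)) * R = 1) :
    R * A = A * R - s⁻¹ • (R * (d * A - A * d) * R) := by
  have hcomm : s⁻¹ • (d * A - A * d)
      = (s⁻¹ • d - z • (1 : 𝒜)) * A - A * (s⁻¹ • d - z • (1 : 𝒜)) := by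
    simp only [sub_mul, mul_sub, smul_mul_assoc, mul_smul_comm, one_mul, mul_one, smul_sub]
    abel
  rw [← smul_mul_assoc, ← mul_smul_comm, hcomm, mul_sub, sub_mul, ← mul_assoc, hR₁, one_mul,
    mul_assoc R, mul_assoc A, hR₂, mul_one, sub_sub_cancel]

/-- commutator expansion
`R·B = Σ_{r=0}^{p−1} (−1)^r s^{−r} ad_d^r(B)·R^{r+1} + (−1)^p s^{−p} R·ad_d^p(B)·R^p`
for `R = (s⁻¹·d − z·1)⁻¹`. -/
theorem resolvent_commutator_expansion {𝒜 : Type*} [Ring 𝒜] [Algebra ℂ 𝒜]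
    (d B : 𝒜) (s : ℂ) (hs : s ≠ 0) (z : ℂ) (R : 𝒜)
    (hR₁ : R * (s⁻¹ • d - z • (1 : 𝒜)) = 1)
    (hR₂ : (s⁻¹ • d - z • (1 : 𝒜)) * R = 1) :
    ∀ p : ℕ, 1 ≤ p →
      R * B = (∑ r ∈ Finset.range p,
          ((-1 : ℂ) ^ r * s⁻¹ ^ r) • (adPow d r B * R ^ (r + 1)))
        + ((-1 : ℂ) ^ p * s⁻¹ ^ p) • (R * adPow d p B * R ^ p) := by
  intro p hp
  clear hp
  -- The identity also holds at `p = 0`, where it reads `R * B = R * B`.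
  induction p with
  | zero => simp [adPow]
  | succ p ih =>
    rw [ih, Finset.sum_range_succ, add_assoc, resolvent_mul d (adPow d p B) s z R hR₁ hR₂,
      sub_mul, smul_sub, smul_mul_assoc, smul_smul, mul_assoc (adPow d p B), ← pow_succ',
      mul_assoc _ R, ← pow_succ', sub_eq_add_neg, ← neg_smul]
    congr 3
    ring
end

section
/- (Symmetrized commutator expansion of the Hamiltonian part, bounded case.) Let n ≥ 1 be an integer, δ > 0, and χ ∈ 𝒳_δ. Then there exist a constant C > 0 and functions ξ^2, …, ξ^n ∈ 𝒳_δ, depending only on n and χ, such that for every complex Hilbert space ℋ, all bounded self-adjoint operators H and Φ on ℋ, every s > 0 and every α ∈ ℝ, the following holds. Set μ := max_{2 ≤ k ≤ n+1} (1 + ‖ad_Φ^k(H)‖²), and define via continuous functional calculus of Φ the operators χ_s := g(Φ) with g(x) = χ((x−α)/s), u_s := h(Φ) with h(x) = √(χ′((x−α)/s)), and (ξ^k)′_s := w_k(Φ) with w_k(x) = (ξ^k)′((x−α)/s). Then the self-adjoint operator Rem := i[H, χ_s] − s^{−1}·u_s·(i[H,Φ])·u_s satisfies both Rem ≤ μ·Σ_{k=2}^{n}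 s^{−k}·(ξ^k)′_s + C·μ·s^{−(n+1)}·I and −Rem ≤ μ·Σ_{k=2}^{n} s^{−k}·(ξ^k)′_s + C·μ·s^{−(n+1)}·I, in the sense of the order on bounded self-adjoint operators (for n = 1 the sums over k are empty). -/
/-!
Everything is done for the rescaled operator `Ψ = (Φ - α)/s`: its functional calculus is that of
`Φ` applied to `x ↦ g ((x - α)/s)`, and `ad_Ψ^k = s⁻ᵏ ad_Φ^k`, so every power of `s⁻¹` in the
claim comes from a `k`-fold commutator with `Ψ`.

*Commutator expansion.* For a test function `f`, Fourier inversion gives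
`f(Ψ) = ∫ f̂(t) e^{2πitΨ} dt`. Expanding `e^{2πitΨ} A e^{-2πitΨ}` in powers of `t` yields
`f(Ψ) A = ∑_{k<m} (1/k!) ad_Ψ^k(A) f⁽ᵏ⁾(Ψ) + R`, where `‖R‖ ≤ ‖(f⁽ᵐ⁾)^‖_{L¹} ‖ad_Ψ^m(A)‖`
(`norm_conj_sub_taylor_le`, `IsTest.commutator_expansion`). The function `χ` is not compactly
supported, but on the spectrum of `Ψ` it agrees with `χ - χ(· - R)` for `R` large, and the error
constant of the latter is at most twice the one of `χ`, whatever `R` (`commutator_expansion_cutoff`).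

*Symmetrization.* Let `u = √χ′` and `B_k = ad_Ψ^k(H)`. The term `k = 1` of the expansion of
`[χ(Ψ), H]` is `B₁ u(Ψ)²`; commuting one factor `u(Ψ)` to the left by the same expansion leaves
`[χ(Ψ), H] = u(Ψ) B₁ u(Ψ) + ∑_{k=2}^n B_k F_k(Ψ) + O(‖B_{n+1}‖)`, where the functions `F_k`
(`coef`) are supported in `supp χ′`. Choose a bump function `θ` supported in `(0, δ/2)` and equal
to `1` near `supp χ′`. Since `θ F_k = F_k` and `θ⁽ʲ⁾ F_k = 0` for `j ≥ 1`, the expansion of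
`θ(Ψ) B_k` shows that `B_k F_k(Ψ) = θ(Ψ) B_k F_k(Ψ) θ(Ψ) + O(‖B_{n+1}‖)`
(`symmetrized_expansion`).

*Order bound.* The quadratic form of the self-adjoint operator `Rem` at `x` is therefore at most
`∑ ‖B_k‖ sup|F_k| ‖θ(Ψ)x‖² + C ‖B_{n+1}‖ ‖x‖²` in absolute value
(`isPositive_of_decomposition`). As `‖ad_Φ^k(H)‖ ≤ 1 + ‖ad_Φ^k(H)‖² ≤ μ`, this is the claim, with
`ξ^k` the primitive of `sup|F_k| θ²` (`exists_memXClass`).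
-/

open MeasureTheory Real

/-- The class `𝒳_δ` of smooth cutoff functions: `supp χ ⊆ [0,∞)`, `supp χ′ ⊆ (0, δ/2)`,
`χ′ ≥ 0`, and `√χ′` smooth. -/
def MemXClass (δ : ℝ) (χ : ℝ → ℝ) : Prop :=
  ContDiff ℝ (⊤ : ℕ∞) χ ∧ tsupport χ ⊆ Set.Ici 0 ∧ tsupport (deriv χ) ⊆ Set.Ioo 0 (δ / 2) ∧
    (∀ x : ℝ, 0 ≤ deriv χ x) ∧ ContDiff ℝ (⊤ : ℕ∞) (fun x : ℝ => Real.sqrt (deriv χ x))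

/-! ### Taylor expansion of conjugation by a unitary group -/

section Expansion

variable {𝒜 : Type*} [CStarAlgebra 𝒜]

theorem adPow_adPow (Φ A : 𝒜) (j k : ℕ) : adPow Φ j (adPow Φ k A) = adPow Φ (k + j) A := by
  induction j with
  | zero => rfl
  | succ j ih => rw [← add_assoc]; simp only [adPow, ih]

/-- The unitary group `t ↦ e^{2πitΨ}`. -/
noncomputable def ugrp (Ψ : 𝒜) (t : ℝ) : 𝒜 :=
  NormedSpace.exp (t • ((2 * π * Complex.I : ℂ) • Ψ))

theorem ugrp_zero (Ψ : 𝒜) : ugrp Ψ 0 = 1 := by simp [ugrp]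

theorem hasDerivAt_ugrp (Ψ : 𝒜) (t : ℝ) :
    HasDerivAt (ugrp Ψ) (ugrp Ψ t * ((2 * π * Complex.I : ℂ) • Ψ)) t :=
  hasDerivAt_exp_smul_const (𝕂 := ℝ) _ t

theorem hasDerivAt_ugrp' (Ψ : 𝒜) (t : ℝ) :
    HasDerivAt (ugrp Ψ) (((2 * π * Complex.I : ℂ) • Ψ) * ugrp Ψ t) t :=
  hasDerivAt_exp_smul_const' (𝕂 := ℝ) _ t

theorem continuous_ugrp (Ψ : 𝒜) : Continuous (ugrp Ψ) :=
  continuous_iff_continuousAt.2 fun t => (hasDerivAt_ugrp Ψ t).continuousAt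

theorem ugrp_neg_mul (Ψ : 𝒜) (t : ℝ) : ugrp Ψ (-t) * ugrp Ψ t = 1 := by
  let +nondep : NormedAlgebra ℚ 𝒜 := .restrictScalars ℚ ℂ 𝒜
  unfold ugrp
  rw [← NormedSpace.exp_add_of_commute, neg_smul, neg_add_cancel, NormedSpace.exp_zero]
  exact ((Commute.refl _).smul_left _).smul_right _

theorem norm_ugrp_le {Ψ : 𝒜} (hΨ : IsSelfAdjoint Ψ) (t : ℝ) : ‖ugrp Ψ t‖ ≤ 1 := by
  let +nondep : NormedAlgebra ℚ 𝒜 := .restrictScalars ℚ ℂ 𝒜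
  have h : ugrp Ψ t ∈ unitary 𝒜 := by
    refine NormedSpace.exp_mem_unitary_of_mem_skewAdjoint ?_
    rw [skewAdjoint.mem_iff]
    simp [hΨ.star_eq]
  nontriviality 𝒜
  exact (CStarRing.norm_of_mem_unitary h).le

/-- Conjugating by `e^{2πitΨ}` is `e^{2πit ad_Ψ}`: its Taylor expansion in `t`, with a bound on
the remainder (without the factor `1/m!`, so that it follows from the mean value inequality). -/
theorem norm_conj_sub_taylor_le {Ψ : 𝒜} (hΨ : IsSelfAdjoint Ψ) (m : ℕ) :
    ∀ (A : 𝒜) (t : ℝ),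
      ‖ugrp Ψ t * A * ugrp Ψ (-t) - ∑ k ∈ Finset.range m,
        ((2 * π * Complex.I * t : ℂ) ^ k / (k.factorial : ℂ)) • adPow Ψ k A‖
        ≤ (2 * π * |t|) ^ m * ‖adPow Ψ m A‖ := by
  induction m with
  | zero =>
    intro A t
    simp only [Finset.range_zero, Finset.sum_empty, sub_zero, pow_zero, one_mul, adPow]
    calc _ ≤ ‖ugrp Ψ t‖ * ‖A‖ * ‖ugrp Ψ (-t)‖ := norm_mul₃_le ..
      _ ≤ 1 * ‖A‖ * 1 := by gcongr <;> exact norm_ugrp_le hΨ _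
      _ = ‖A‖ := by ring
  | succ m ih =>
    intro A t
    set T : ℝ → 𝒜 := fun t => ugrp Ψ t * A * ugrp Ψ (-t) - ∑ k ∈ Finset.range (m + 1),
        ((2 * π * Complex.I * t : ℂ) ^ k / (k.factorial : ℂ)) • adPow Ψ k A with hT
    set T' : ℝ → 𝒜 := fun t => (2 * π * Complex.I : ℂ) •
      (ugrp Ψ t * adPow Ψ 1 A * ugrp Ψ (-t) - ∑ k ∈ Finset.range m,
        ((2 * π * Complex.I * t : ℂ) ^ k / (k.factorial : ℂ)) • adPow Ψ k (adPow Ψ 1 A)) with hT'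
    have hd : ∀ t, HasDerivAt T (T' t) t := by
      intro t
      have h1 : HasDerivAt (fun t => ugrp Ψ t * A * ugrp Ψ (-t))
          ((2 * π * Complex.I : ℂ) • (ugrp Ψ t * adPow Ψ 1 A * ugrp Ψ (-t))) t := by
        have hn : HasDerivAt (fun t : ℝ => ugrp Ψ (-t))
            (-(((2 * π * Complex.I : ℂ) • Ψ) * ugrp Ψ (-t))) t := by
          exact ((hasDerivAt_ugrp' Ψ (-t)).scomp t (hasDerivAt_neg t)).congr_deriv (by simp)
        refine (((hasDerivAt_ugrp Ψ t).mul_const A).mul hn).congr_deriv ?_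
        simp only [adPow, smul_mul_assoc, mul_smul_comm, mul_sub, sub_mul, mul_neg, smul_sub,
          mul_assoc]
        abel
      have h2 : HasDerivAt (fun t : ℝ => ∑ k ∈ Finset.range (m + 1),
          ((2 * π * Complex.I * t : ℂ) ^ k / (k.factorial : ℂ)) • adPow Ψ k A)
          ((2 * π * Complex.I : ℂ) • ∑ k ∈ Finset.range m,
          ((2 * π * Complex.I * t : ℂ) ^ k / (k.factorial : ℂ)) • adPow Ψ k (adPow Ψ 1 A)) t := by
        simp only [Finset.sum_range_succ' _ m, pow_zero, Finset.smul_sum]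
        refine HasDerivAt.add_const _ ?_
        refine HasDerivAt.fun_sum fun k _ => ?_
        rw [adPow_adPow, add_comm 1 k, smul_smul]
        refine HasDerivAt.smul_const ?_ _
        have h3 : HasDerivAt (fun t : ℝ => (2 * π * Complex.I * t : ℂ)) (2 * π * Complex.I) t := by
          simpa using (Complex.ofRealCLM.hasDerivAt (x := t)).const_mul (2 * π * Complex.I : ℂ)
        refine ((h3.pow (k + 1)).div_const _).congr_deriv ?_
        have : (k.factorial : ℂ) ≠ 0 := by exact_mod_cast k.factorial_ne_zero
        have : (k + 1 : ℂ) ≠ 0 := by exact_mod_cast k.succ_ne_zero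
        rw [Nat.factorial_succ]
        push_cast
        field_simp
      refine (h1.sub h2).congr_deriv ?_
      simp only [hT', smul_sub]
    -- `T` vanishes at `0`, and its derivative is `2πi` times the remainder of order `m` for `ad_Ψ(A)`.
    have h0 : T 0 = 0 := by
      simp [hT, ugrp_zero, Finset.sum_range_succ', adPow]
    have hb : ∀ x ∈ Set.uIcc 0 t, ‖T' x‖ ≤ (2 * π) * ((2 * π * |t|) ^ m * ‖adPow Ψ (m + 1) A‖) := by
      intro x hx
      have hxt : |x| ≤ |t| := by
        rw [Set.mem_uIcc] at hx
        rcases hx with h | h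
        · rw [abs_of_nonneg h.1, abs_of_nonneg (h.1.trans h.2)]; exact h.2
        · rw [abs_of_nonpos h.2, abs_of_nonpos (h.1.trans h.2)]; linarith [h.1]
      rw [hT', norm_smul]
      have : ‖(2 * π * Complex.I : ℂ)‖ = 2 * π := by simp [abs_of_pos pi_pos]
      rw [this]
      gcongr
      refine (ih (adPow Ψ 1 A) x).trans ?_
      rw [adPow_adPow, add_comm 1 m]
      gcongr
    have := Convex.norm_image_sub_le_of_norm_hasDerivWithin_le (f := T) (f' := T')
      (fun x _ => (hd x).hasDerivWithinAt) hb (convex_uIcc 0 t)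
      Set.left_mem_uIcc Set.right_mem_uIcc
    rw [h0, sub_zero, sub_zero, Real.norm_eq_abs] at this
    refine this.trans (le_of_eq ?_)
    ring

/-! ### Fourier representation and the commutator expansion -/

/-- Smooth real functions with compact support. -/
def IsTest (f : ℝ → ℝ) : Prop := ContDiff ℝ (⊤ : ℕ∞) f ∧ HasCompactSupport f

theorem IsTest.deriv {f : ℝ → ℝ} (hf : IsTest f) : IsTest (deriv f) :=
  ⟨(contDiff_infty_iff_deriv.1 hf.1).2, hf.2.deriv⟩

theorem IsTest.iteratedDeriv {f : ℝ → ℝ} (hf : IsTest f) (k : ℕ) : IsTest (iteratedDeriv k f) := by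
  induction k with
  | zero => simpa using hf
  | succ k ih => rw [iteratedDeriv_succ]; exact ih.deriv

theorem IsTest.continuous {f : ℝ → ℝ} (hf : IsTest f) : Continuous f := hf.1.continuous

/-- The Fourier transform of a real function. -/
noncomputable def fhat (f : ℝ → ℝ) : ℝ → ℂ := FourierTransform.fourier (fun x => (f x : ℂ))

theorem IsTest.integrable {f : ℝ → ℝ} (hf : IsTest f) : Integrable (fun x => (f x : ℂ)) :=
  (hf.continuous.integrable_of_hasCompactSupport hf.2).ofReal

theorem IsTest.exists_schwartz {f : ℝ → ℝ} (hf : IsTest f) :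
    ∃ S : SchwartzMap ℝ ℂ, fhat f = S := by
  have h1 : HasCompactSupport (fun x => (f x : ℂ)) := hf.2.comp_left (g := Complex.ofReal) rfl
  have h2 : ContDiff ℝ (⊤ : ℕ∞) (fun x => (f x : ℂ)) := Complex.ofRealCLM.contDiff.comp hf.1
  refine ⟨FourierTransform.fourier (h1.toSchwartzMap h2), ?_⟩
  rw [SchwartzMap.fourier_coe]
  rfl

theorem IsTest.integrable_fhat {f : ℝ → ℝ} (hf : IsTest f) : Integrable (fhat f) := by
  obtain ⟨S, hS⟩ := hf.exists_schwartz
  rw [hS]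
  exact S.integrable

theorem IsTest.continuous_fhat {f : ℝ → ℝ} (hf : IsTest f) : Continuous (fhat f) := by
  obtain ⟨S, hS⟩ := hf.exists_schwartz
  rw [hS]
  exact S.continuous

theorem IsTest.fhat_deriv {f : ℝ → ℝ} (hf : IsTest f) (t : ℝ) :
    fhat (_root_.deriv f) t = (2 * π * Complex.I * t) * fhat f t := by
  have hd : ∀ x, HasDerivAt (fun x => (f x : ℂ)) ((_root_.deriv f x : ℝ) : ℂ) x := fun x =>
    ((hf.1.differentiable (by simp)) x).hasDerivAt.ofReal_comp
  have he : _root_.deriv (fun x => (f x : ℂ)) = fun x => ((_root_.deriv f x : ℝ) : ℂ) :=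
    funext fun x => (hd x).deriv
  have := Real.fourier_deriv hf.integrable (fun x => (hd x).differentiableAt)
    (by rw [he]; exact hf.deriv.integrable)
  rw [he] at this
  exact congrFun this t

theorem IsTest.fhat_iteratedDeriv {f : ℝ → ℝ} (hf : IsTest f) (k : ℕ) (t : ℝ) :
    fhat (_root_.iteratedDeriv k f) t = (2 * π * Complex.I * t) ^ k * fhat f t := by
  induction k with
  | zero => simp
  | succ k ih => rw [iteratedDeriv_succ, (hf.iteratedDeriv k).fhat_deriv, ih]; ring

/-- Fourier inversion, with the exponential in the form used for the functional calculus. -/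
theorem IsTest.inversion {f : ℝ → ℝ} (hf : IsTest f) (x : ℝ) :
    ∫ t : ℝ, fhat f t * Complex.exp ((2 * π * Complex.I * t) * x) = f x := by
  have h := congrFun (Continuous.fourierInv_fourier_eq
    (Complex.continuous_ofReal.comp hf.continuous) hf.integrable hf.integrable_fhat) x
  rw [Real.fourierInv_eq'] at h
  simp only [Function.comp_apply] at h
  rw [← h]
  congr 1
  ext t
  rw [smul_eq_mul, mul_comm]
  congr 2
  simp
  ring

/-- The exponent involves `z.re` rather than `z`, so that the function is bounded on all of `ℂ`,
as the interchange of integral and functional calculus in `IsTest.cfc_eq_integral` requires. -/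
theorem cfc_exp_eq_ugrp {Ψ : 𝒜} (hΨ : IsSelfAdjoint Ψ) (t : ℝ) :
    cfc (fun z : ℂ => Complex.exp ((2 * π * Complex.I * t) * (z.re : ℂ))) Ψ = ugrp Ψ t := by
  have hn : IsStarNormal Ψ := hΨ.isStarNormal
  have h1 : cfc (fun z : ℂ => Complex.exp ((2 * π * Complex.I * t) * (z.re : ℂ))) Ψ =
      cfc (fun z : ℂ => Complex.exp ((2 * π * Complex.I * t : ℂ) • z)) Ψ := by
    refine cfc_congr fun z hz => ?_
    have := hΨ.mem_spectrum_eq_re hz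
    simp only [smul_eq_mul]
    rw [← this]
  rw [h1, cfc_comp_smul (2 * π * Complex.I * t : ℂ) Complex.exp Ψ (by fun_prop) hn,
    CFC.complex_exp_eq_normedSpace_exp (hn.smul _), ugrp]
  congr 1
  rw [← Complex.coe_smul, smul_smul]
  congr 1
  ring

/-- The functional calculus of a test function as a Fourier integral over the unitary group. -/
theorem IsTest.cfc_eq_integral {f : ℝ → ℝ} (hf : IsTest f) {Ψ : 𝒜} (hΨ : IsSelfAdjoint Ψ) :
    cfc f Ψ = ∫ t, fhat f t • ugrp Ψ t := by
  have hn : IsStarNormal Ψ := hΨ.isStarNormal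
  rw [cfc_real_eq_complex f hΨ]
  simp_rw [← hf.inversion]
  have hc := hf.continuous_fhat
  rw [cfc_integral (fun (t : ℝ) (z : ℂ) =>
      fhat f t * Complex.exp ((2 * π * Complex.I * t) * (z.re : ℂ))) (fun t => ‖fhat f t‖) Ψ ?_ ?_
      hf.integrable_fhat.norm.hasFiniteIntegral hn]
  · congr 1
    ext t
    rw [cfc_const_mul (fhat f t) (fun z : ℂ => Complex.exp ((2 * π * Complex.I * t) * (z.re : ℂ))) Ψ
      (by fun_prop), cfc_exp_eq_ugrp hΨ]
  · apply Continuous.continuousOn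
    simp only [Function.uncurry_def]
    have := hc.comp (continuous_fst (X := ℝ) (Y := ℂ))
    simp only [Function.comp_def] at this
    fun_prop
  · refine .of_forall fun t z _ => ?_
    rw [norm_mul]
    have : (2 * π * Complex.I * t : ℂ) * (z.re : ℂ) = ((2 * π * t * z.re : ℝ) : ℂ) * Complex.I := by
      push_cast; ring
    rw [this, Complex.norm_exp_ofReal_mul_I, mul_one]

/-- The `L¹` norm of the Fourier transform of `f`. Taken at `f⁽ᵐ⁾`, it is the constant of the
commutator expansion of order `m`. -/
noncomputable def fconst (f : ℝ → ℝ) : ℝ := ∫ t, ‖fhat f t‖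

theorem fconst_nonneg (f : ℝ → ℝ) : 0 ≤ fconst f := integral_nonneg fun _ => norm_nonneg _

theorem IsTest.integrable_smul_ugrp {f : ℝ → ℝ} (hf : IsTest f) {Ψ : 𝒜} (hΨ : IsSelfAdjoint Ψ) :
    Integrable fun t => fhat f t • ugrp Ψ t := by
  refine hf.integrable_fhat.norm.mono'
    (hf.continuous_fhat.smul (continuous_ugrp Ψ)).aestronglyMeasurable (.of_forall fun t => ?_)
  rw [norm_smul]
  exact mul_le_of_le_one_right (norm_nonneg _) (norm_ugrp_le hΨ t)

/-- The commutator expansion of order `m`, with a remainder controlled by `ad_Ψ^m(A)` alone. -/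
theorem IsTest.commutator_expansion {f : ℝ → ℝ} (hf : IsTest f) {Ψ : 𝒜} (hΨ : IsSelfAdjoint Ψ)
    (A : 𝒜) (m : ℕ) :
    ‖cfc f Ψ * A - ∑ k ∈ Finset.range m,
      (k.factorial : ℝ)⁻¹ • (adPow Ψ k A * cfc (_root_.iteratedDeriv k f) Ψ)‖
      ≤ fconst (_root_.iteratedDeriv m f) * ‖adPow Ψ m A‖ := by
  have hI : ∀ k, Integrable fun t => fhat (_root_.iteratedDeriv k f) t • ugrp Ψ t := fun k =>
    (hf.iteratedDeriv k).integrable_smul_ugrp hΨ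
  have hI' : ∀ k, Integrable fun t => (k.factorial : ℝ)⁻¹ •
      (adPow Ψ k A * (fhat (_root_.iteratedDeriv k f) t • ugrp Ψ t)) := fun k =>
    ((hI k).const_mul _).smul _
  have h1 : cfc f Ψ * A = ∫ t, (fhat f t • ugrp Ψ t) * A := by
    rw [integral_mul_const_of_integrable (hf.integrable_smul_ugrp hΨ), hf.cfc_eq_integral hΨ]
  have h2 : ∑ k ∈ Finset.range m,
      (k.factorial : ℝ)⁻¹ • (adPow Ψ k A * cfc (_root_.iteratedDeriv k f) Ψ) =
      ∫ t, ∑ k ∈ Finset.range m, (k.factorial : ℝ)⁻¹ •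
        (adPow Ψ k A * (fhat (_root_.iteratedDeriv k f) t • ugrp Ψ t)) := by
    rw [integral_finsetSum _ fun k _ => hI' k]
    refine Finset.sum_congr rfl fun k _ => ?_
    rw [integral_smul, integral_const_mul_of_integrable (hI k),
      (hf.iteratedDeriv k).cfc_eq_integral hΨ]
  rw [h1, h2, ← integral_sub ((hf.integrable_smul_ugrp hΨ).mul_const A)
    (integrable_finsetSum _ fun k _ => hI' k), fconst, ← integral_mul_const]
  refine norm_integral_le_of_norm_le ((hf.iteratedDeriv m).integrable_fhat.norm.mul_const _)
    (.of_forall fun t => ?_)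
  -- The factor `(2πit)^k` produced by differentiating `f` is the one in the Taylor expansion of
  -- the conjugation by `e^{2πitΨ}`.
  have h3 : (fhat f t • ugrp Ψ t) * A - ∑ k ∈ Finset.range m, (k.factorial : ℝ)⁻¹ •
      (adPow Ψ k A * (fhat (_root_.iteratedDeriv k f) t • ugrp Ψ t)) =
      fhat f t • ((ugrp Ψ t * A * ugrp Ψ (-t) - ∑ k ∈ Finset.range m,
        ((2 * π * Complex.I * t : ℂ) ^ k / (k.factorial : ℂ)) • adPow Ψ k A) * ugrp Ψ t) := by
    rw [sub_mul, mul_assoc _ (ugrp Ψ (-t)), ugrp_neg_mul, mul_one, smul_sub, smul_mul_assoc,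
      Finset.sum_mul, Finset.smul_sum]
    congr 1
    refine Finset.sum_congr rfl fun k _ => ?_
    rw [hf.fhat_iteratedDeriv, smul_mul_assoc, smul_smul, mul_smul_comm, ← Complex.coe_smul,
      smul_smul]
    congr 1
    push_cast
    ring
  rw [h3, norm_smul, hf.fhat_iteratedDeriv, norm_mul (_ ^ m), norm_pow]
  have h4 : ‖(2 * π * Complex.I * t : ℂ)‖ = 2 * π * |t| := by simp [abs_of_pos pi_pos]
  rw [h4]
  calc _ ≤ ‖fhat f t‖ * (((2 * π * |t|) ^ m * ‖adPow Ψ m A‖) * 1) := by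
        gcongr
        refine (norm_mul_le _ _).trans ?_
        gcongr
        · exact norm_conj_sub_taylor_le hΨ m A t
        · exact norm_ugrp_le hΨ t
    _ = _ := by ring

/-- A translation only multiplies the Fourier transform by a phase, so the bound is uniform in
`R`. -/
theorem IsTest.fconst_sub_translate_le {f : ℝ → ℝ} (hf : IsTest f) (R : ℝ) :
    fconst (fun x => f x - f (x - R)) ≤ 2 * fconst f := by
  have hg : IsTest (fun x => f (x - R)) :=
    ⟨hf.1.comp (contDiff_id.sub contDiff_const), hf.2.comp_homeomorph (Homeomorph.subRight R)⟩
  have hi := hf.integrable_fhat.norm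
  have h : ∀ t, ‖fhat (fun x => f x - f (x - R)) t‖ ≤ 2 * ‖fhat f t‖ := by
    intro t
    have h1 : fhat (fun x => f x - f (x - R)) t = fhat f t - fhat (fun x => f (x - R)) t := by
      simp only [fhat, Real.fourier_eq, ← integral_sub
        ((Real.fourierIntegral_convergent_iff t).2 hf.integrable)
        ((Real.fourierIntegral_convergent_iff t).2 hg.integrable)]
      simp [smul_sub]
    have h2 : ‖fhat (fun x => f (x - R)) t‖ = ‖fhat f t‖ := by
      have := congrFun (VectorFourier.fourierIntegral_comp_add_right Real.fourierChar volume
        (innerₗ ℝ) (fun x => (f x : ℂ)) (-R)) t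
      have h3 : fhat (fun x => f (x - R)) t = Real.fourierChar (innerₗ ℝ (-R) t) • fhat f t := this
      rw [h3, Circle.norm_smul]
    rw [h1]
    linarith [norm_sub_le (fhat f t) (fhat (fun x => f (x - R)) t)]
  calc _ ≤ ∫ t, 2 * ‖fhat f t‖ :=
        integral_mono_of_nonneg (.of_forall fun _ => norm_nonneg _) (hi.const_mul 2) (.of_forall h)
    _ = _ := integral_const_mul _ _

/-- The commutator expansion for a function that vanishes on the left and is constant on the
right: on the spectrum of `Ψ` it agrees with the test function `x ↦ χ x - χ (x - R)`, `R` large,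
whose derivatives have Fourier transforms with `L¹` norms bounded independently of `R`. -/
theorem commutator_expansion_cutoff {χ : ℝ → ℝ} (hχ : ContDiff ℝ (⊤ : ℕ∞) χ)
    (hd : IsTest (deriv χ)) (h0 : ∀ x < 0, χ x = 0) {b : ℝ}
    (hb : ∀ x, b ≤ x → χ x = χ b) {Ψ : 𝒜} (hΨ : IsSelfAdjoint Ψ) (A : 𝒜) (m : ℕ) :
    ‖cfc χ Ψ * A - ∑ k ∈ Finset.range (m + 1),
      (k.factorial : ℝ)⁻¹ • (adPow Ψ k A * cfc (iteratedDeriv k χ) Ψ)‖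
      ≤ 2 * fconst (iteratedDeriv (m + 1) χ) * ‖adPow Ψ (m + 1) A‖ := by
  -- The spectrum of `Ψ` lies to the left of `R`, where `x ↦ χ (x - R)` vanishes.
  set R : ℝ := ‖Ψ‖ * ‖(1 : 𝒜)‖ + 1 with hR
  have hR0 : 0 ≤ R := by positivity
  set f : ℝ → ℝ := fun x => χ x - χ (x - R) with hf
  have hχR : ContDiff ℝ (⊤ : ℕ∞) (fun x => χ (x - R)) := hχ.comp (contDiff_id.sub contDiff_const)
  have hft : IsTest f := by
    refine ⟨hχ.sub hχR, HasCompactSupport.intro (isCompact_Icc (a := 0) (b := b + R)) ?_⟩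
    intro x hx
    simp only [hf]
    rcases lt_or_ge x 0 with h | h
    · rw [h0 x h, h0 _ (by linarith), sub_zero]
    · have : b + R < x := by
        by_contra hc
        exact hx ⟨h, not_lt.1 hc⟩
      rw [hb x (by linarith), hb (x - R) (by linarith), sub_self]
  have hder : ∀ k, iteratedDeriv k f = fun x => iteratedDeriv k χ x - iteratedDeriv k χ (x - R) := by
    intro k
    ext x
    have h1 := iteratedDeriv_sub (n := k) (x := x) (f := χ) (g := fun x => χ (x - R))
      (hχ.contDiffAt.of_le (by exact_mod_cast le_top))
      (hχR.contDiffAt.of_le (by exact_mod_cast le_top))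
    rw [iteratedDeriv_comp_sub_const] at h1
    exact h1
  have hcfc : ∀ k, cfc (iteratedDeriv k f) Ψ = cfc (iteratedDeriv k χ) Ψ := by
    intro k
    refine cfc_congr fun x hx => ?_
    have hx' : |x| ≤ ‖Ψ‖ * ‖(1 : 𝒜)‖ := spectrum.norm_le_norm_mul_of_mem hx
    have hlt : x - R < 0 := by linarith [le_abs_self x]
    have he : χ =ᶠ[nhds (x - R)] fun _ => 0 := by
      filter_upwards [Iio_mem_nhds hlt] with y hy using h0 y hy
    rw [hder]
    simp only
    rw [he.iteratedDeriv_eq]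
    simp
  have hconst : fconst (iteratedDeriv (m + 1) f) ≤ 2 * fconst (iteratedDeriv (m + 1) χ) := by
    rw [hder]
    refine IsTest.fconst_sub_translate_le ?_ R
    rw [iteratedDeriv_succ']
    exact hd.iteratedDeriv m
  have := hft.commutator_expansion hΨ A (m + 1)
  have hc0 := hcfc 0
  simp only [iteratedDeriv_zero] at hc0
  simp only [hcfc, hc0] at this
  exact this.trans (by gcongr)

/-! ### Symmetrization -/

/-- The function `F_k = χ⁽ᵏ⁾/k! - u⁽ᵏ⁻¹⁾ u/(k-1)!`, the coefficient of `ad_Ψ^k(A)` in the expansion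
of `[χ(Ψ), A] - u(Ψ) [Ψ, A] u(Ψ)`. It is used for `k ≥ 2` only. -/
noncomputable def coef (χ u : ℝ → ℝ) (k : ℕ) (x : ℝ) : ℝ :=
  (k.factorial : ℝ)⁻¹ * iteratedDeriv k χ x
    - ((k - 1).factorial : ℝ)⁻¹ * (iteratedDeriv (k - 1) u x * u x)

/-- The symmetrized expansion with an explicit error, for an auxiliary cutoff `θ` that equals `1`
on the supports of the coefficients. -/
theorem symmetrized_expansion {χ u θ : ℝ → ℝ} (hχ : ContDiff ℝ (⊤ : ℕ∞) χ)
    (hd : IsTest (deriv χ)) (h0 : ∀ x < 0, χ x = 0) {b : ℝ}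
    (hb : ∀ x, b ≤ x → χ x = χ b) (hu : IsTest u) (hθ : IsTest θ)
    (huu : ∀ x, u x * u x = deriv χ x)
    (hθF : ∀ k, 2 ≤ k → ∀ x, coef χ u k x * θ x = coef χ u k x)
    (hθF' : ∀ k, 2 ≤ k → ∀ j, 1 ≤ j → ∀ x, iteratedDeriv j θ x * coef χ u k x = 0)
    {M : ℕ → ℝ} {M₀ : ℝ} (hM₀ : ∀ x, |u x| ≤ M₀) (hM : ∀ k, 2 ≤ k → ∀ x, |coef χ u k x| ≤ M k)
    {Ψ : 𝒜} (hΨ : IsSelfAdjoint Ψ) (A : 𝒜) {n : ℕ} (hn : 1 ≤ n) :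
    ‖(cfc χ Ψ * A - A * cfc χ Ψ) - cfc u Ψ * adPow Ψ 1 A * cfc u Ψ
      - ∑ k ∈ Finset.Icc 2 n, cfc θ Ψ * (adPow Ψ k A * cfc (coef χ u k) Ψ) * cfc θ Ψ‖
      ≤ (2 * fconst (iteratedDeriv (n + 1) χ) + fconst (iteratedDeriv n u) * M₀
        + ∑ k ∈ Finset.Icc 2 n, fconst (iteratedDeriv (n + 1 - k) θ) * M k)
        * ‖adPow Ψ (n + 1) A‖ := by
  have hcχ : ∀ k, Continuous (iteratedDeriv k χ) := fun k =>
    hχ.continuous_iteratedDeriv k (by exact_mod_cast le_top)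
  have hcu : ∀ k, Continuous (iteratedDeriv k u) := fun k => (hu.iteratedDeriv k).continuous
  have hcθ : ∀ k, Continuous (iteratedDeriv k θ) := fun k => (hθ.iteratedDeriv k).continuous
  have hcu0 := hu.continuous
  have hcθ0 := hθ.continuous
  have hcF : ∀ k, Continuous (coef χ u k) := by
    intro k
    have := hcχ k
    have := hcu (k - 1)
    unfold coef
    fun_prop
  have hM₀' : 0 ≤ M₀ := (abs_nonneg _).trans (hM₀ 0)
  set B : ℕ → 𝒜 := fun k => adPow Ψ k A with hB
  set R1 : 𝒜 := cfc χ Ψ * A - ∑ k ∈ Finset.range (n + 1),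
      (k.factorial : ℝ)⁻¹ • (adPow Ψ k A * cfc (iteratedDeriv k χ) Ψ) with hR1
  set R2 : 𝒜 := cfc u Ψ * B 1 - ∑ k ∈ Finset.range n,
      (k.factorial : ℝ)⁻¹ • (adPow Ψ k (B 1) * cfc (iteratedDeriv k u) Ψ) with hR2
  set R3 : ℕ → 𝒜 := fun i => cfc θ Ψ * B i - ∑ k ∈ Finset.range (n + 1 - i),
      (k.factorial : ℝ)⁻¹ • (adPow Ψ k (B i) * cfc (iteratedDeriv k θ) Ψ) with hR3
  have b1 : ‖R1‖ ≤ 2 * fconst (iteratedDeriv (n + 1) χ) * ‖B (n + 1)‖ :=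
    commutator_expansion_cutoff hχ hd h0 hb hΨ A n
  have b2 : ‖R2‖ ≤ fconst (iteratedDeriv n u) * ‖B (n + 1)‖ := by
    have := hu.commutator_expansion hΨ (B 1) n
    rwa [hB, adPow_adPow, add_comm 1 n] at this
  have b3 : ∀ k ∈ Finset.Icc 2 n,
      ‖R3 k‖ ≤ fconst (iteratedDeriv (n + 1 - k) θ) * ‖B (n + 1)‖ := by
    intro k hk
    have hk := Finset.mem_Icc.1 hk
    have := hθ.commutator_expansion hΨ (B k) (n + 1 - k)
    rwa [hB, adPow_adPow, show k + (n + 1 - k) = n + 1 by omega] at this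
  have e1 : R1 = cfc χ Ψ * A - A * cfc χ Ψ - B 1 * cfc (deriv χ) Ψ
      - ∑ k ∈ Finset.Icc 2 n, (k.factorial : ℝ)⁻¹ • (B k * cfc (iteratedDeriv k χ) Ψ) := by
    have : Finset.Icc 2 n = Finset.Ico 2 (n + 1) := rfl
    rw [this, hR1, Finset.range_eq_Ico, Finset.sum_eq_sum_Ico_succ_bot (by omega),
      Finset.sum_eq_sum_Ico_succ_bot (by omega)]
    simp only [Nat.factorial_zero, zero_add, Nat.factorial_one, Nat.cast_one, inv_one, one_smul,
      iteratedDeriv_zero, iteratedDeriv_one, adPow.eq_1, hB]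
    abel
  have e2 : R2 * cfc u Ψ = cfc u Ψ * B 1 * cfc u Ψ - B 1 * cfc (deriv χ) Ψ
      - ∑ k ∈ Finset.Icc 2 n, ((k - 1).factorial : ℝ)⁻¹ •
        (B k * (cfc (iteratedDeriv (k - 1) u) Ψ * cfc u Ψ)) := by
    have h1 : Finset.Icc 2 n = Finset.Ico (1 + 1) (n + 1) := rfl
    have h2 : cfc (deriv χ) Ψ = cfc u Ψ * cfc u Ψ := by
      rw [← cfc_mul u u Ψ hcu0.continuousOn hcu0.continuousOn]
      simp only [huu]
    rw [h1, ← Finset.sum_Ico_add' (fun k => ((k - 1).factorial : ℝ)⁻¹ •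
        (B k * (cfc (iteratedDeriv (k - 1) u) Ψ * cfc u Ψ))) 1 n 1,
      hR2, Finset.range_eq_Ico, Finset.sum_eq_sum_Ico_succ_bot (by omega), h2]
    simp only [Nat.factorial_zero, zero_add, Nat.cast_one, inv_one, one_smul, hB, adPow_adPow,
      iteratedDeriv_zero, Nat.add_sub_cancel, sub_mul, add_mul, Finset.sum_mul, smul_mul_assoc,
      mul_assoc, add_comm 1]
    abel
  -- In the expansion of `θ(Ψ) B_k F_k(Ψ)` the terms of order `j ≥ 1` vanish, as `θ⁽ʲ⁾ F_k = 0`.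
  have e3 : ∀ k ∈ Finset.Icc 2 n, R3 k * cfc (coef χ u k) Ψ =
      cfc θ Ψ * (B k * cfc (coef χ u k) Ψ) * cfc θ Ψ - B k * cfc (coef χ u k) Ψ := by
    intro k hk
    have hk := Finset.mem_Icc.1 hk
    have hv : ∀ j, 1 ≤ j → cfc (iteratedDeriv j θ) Ψ * cfc (coef χ u k) Ψ = 0 := by
      intro j hj
      rw [← cfc_mul _ _ Ψ (hcθ j).continuousOn (hcF k).continuousOn]
      simp only [hθF' k hk.1 j hj]
      exact cfc_const_zero ℝ Ψ
    have hc : cfc (coef χ u k) Ψ * cfc θ Ψ = cfc (coef χ u k) Ψ := by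
      rw [← cfc_mul _ _ Ψ (hcF k).continuousOn hcθ0.continuousOn]
      simp only [hθF k hk.1]
    have hc' : cfc θ Ψ * cfc (coef χ u k) Ψ = cfc (coef χ u k) Ψ := by
      rw [← cfc_mul _ _ Ψ hcθ0.continuousOn (hcF k).continuousOn]
      simp only [mul_comm (θ _), hθF k hk.1]
    rw [mul_assoc, mul_assoc (B k), hc, hR3]
    simp only [sub_mul, Finset.sum_mul, smul_mul_assoc, mul_assoc]
    rw [Finset.range_eq_Ico, Finset.sum_eq_sum_Ico_succ_bot (by omega),
      Finset.sum_eq_zero (s := Finset.Ico (0 + 1) _)]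
    · simp [adPow, hc']
    · intro j hj
      rw [hv j (by simpa using (Finset.mem_Ico.1 hj).1), mul_zero, smul_zero]
  have e4 : ∀ k, B k * cfc (coef χ u k) Ψ =
      (k.factorial : ℝ)⁻¹ • (B k * cfc (iteratedDeriv k χ) Ψ) - ((k - 1).factorial : ℝ)⁻¹ •
        (B k * (cfc (iteratedDeriv (k - 1) u) Ψ * cfc u Ψ)) := by
    intro k
    have h1 := hcχ k
    have h2 := hcu (k - 1)
    unfold coef
    rw [cfc_sub (fun x => (k.factorial : ℝ)⁻¹ * iteratedDeriv k χ x)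
      (fun x => ((k - 1).factorial : ℝ)⁻¹ * (iteratedDeriv (k - 1) u x * u x)) Ψ
      (by fun_prop) (by fun_prop), cfc_const_mul _ (iteratedDeriv k χ) Ψ (by fun_prop),
      cfc_const_mul _ (fun x => iteratedDeriv (k - 1) u x * u x) Ψ (by fun_prop),
      cfc_mul _ u Ψ (by fun_prop) (by fun_prop), mul_sub, mul_smul_comm, mul_smul_comm]
  have key : (cfc χ Ψ * A - A * cfc χ Ψ) - cfc u Ψ * adPow Ψ 1 A * cfc u Ψ
      - ∑ k ∈ Finset.Icc 2 n, cfc θ Ψ * (adPow Ψ k A * cfc (coef χ u k) Ψ) * cfc θ Ψ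
      = R1 - R2 * cfc u Ψ - ∑ k ∈ Finset.Icc 2 n, R3 k * cfc (coef χ u k) Ψ := by
    rw [e1, e2, Finset.sum_congr rfl e3, Finset.sum_sub_distrib,
      Finset.sum_congr rfl (fun k _ => e4 k : ∀ k ∈ Finset.Icc 2 n, B k * cfc (coef χ u k) Ψ = _),
      Finset.sum_sub_distrib]
    simp only [hB]
    abel
  rw [key]
  have n1 : ‖cfc u Ψ‖ ≤ M₀ := norm_cfc_le hM₀' fun x _ => hM₀ x
  calc _ ≤ ‖R1‖ + ‖R2 * cfc u Ψ‖ + ‖∑ k ∈ Finset.Icc 2 n, R3 k * cfc (coef χ u k) Ψ‖ :=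
        (norm_sub_le _ _).trans (by gcongr; exact norm_sub_le _ _)
    _ ≤ 2 * fconst (iteratedDeriv (n + 1) χ) * ‖B (n + 1)‖
        + (fconst (iteratedDeriv n u) * ‖B (n + 1)‖) * M₀
        + ∑ k ∈ Finset.Icc 2 n, (fconst (iteratedDeriv (n + 1 - k) θ) * ‖B (n + 1)‖) * M k := by
        gcongr
        · refine (norm_mul_le _ _).trans ?_
          gcongr
          exact mul_nonneg (fconst_nonneg _) (norm_nonneg _)
        · refine (norm_sum_le _ _).trans (Finset.sum_le_sum fun k hk => ?_)
          have hk2 := (Finset.mem_Icc.1 hk).1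
          refine (norm_mul_le _ _).trans ?_
          gcongr
          · exact mul_nonneg (fconst_nonneg _) (norm_nonneg _)
          · exact b3 k hk
          · exact norm_cfc_le ((abs_nonneg _).trans (hM k hk2 0)) fun x _ => hM k hk2 x
    _ = _ := by
        simp only [add_mul, Finset.sum_mul]
        congr 1
        · ring
        · exact Finset.sum_congr rfl fun k _ => by ring

end Expansion

/-! ### Cutoff functions and rescaling -/

theorem tsupport_iteratedDeriv_succ_subset {f : ℝ → ℝ} (k : ℕ) :
    tsupport (iteratedDeriv (k + 1) f) ⊆ tsupport (deriv f) := by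
  induction k with
  | zero => simp
  | succ k ih =>
    rw [iteratedDeriv_succ]
    exact (tsupport_deriv_subset).trans ih

/-- A smooth bump function inside `(0, δ/2)` equal to `1` near a given compact set. -/
theorem exists_theta {δ : ℝ} (hδ : 0 < δ) {K : Set ℝ} (hK : IsClosed K)
    (hKδ : K ⊆ Set.Ioo 0 (δ / 2)) :
    ∃ θ : ℝ → ℝ, IsTest θ ∧ (∀ x, 0 ≤ θ x) ∧ tsupport θ ⊆ Set.Ioo 0 (δ / 2) ∧
      ∀ x ∈ K, θ =ᶠ[nhds x] fun _ => 1 := by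
  have hball : Set.Ioo 0 (δ / 2) = Metric.ball (δ / 4) (δ / 4) := by
    rw [Real.ball_eq_Ioo]; congr 1 <;> ring
  rw [hball] at hKδ ⊢
  obtain ⟨r, hr, hKr⟩ := exists_lt_subset_ball hK hKδ
  obtain ⟨r₁, h1, h2⟩ := exists_between (max_lt hr (by linarith : (0 : ℝ) < δ / 4))
  obtain ⟨r₂, h3, h4⟩ := exists_between h2
  let φ : ContDiffBump (δ / 4) := ⟨r₁, r₂, (le_max_right _ _).trans_lt h1, h3⟩
  refine ⟨φ, ⟨φ.contDiff, φ.hasCompactSupport⟩, fun x => φ.nonneg, ?_, fun x hx => ?_⟩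
  · rw [φ.tsupport_eq]
    exact Metric.closedBall_subset_ball h4
  · exact φ.eventuallyEq_one_of_mem_ball
      (Metric.ball_subset_ball ((le_max_left _ _).trans h1.le) (hKr hx))

/-- The primitive of `M θ²` belongs to the cutoff class. -/
theorem exists_memXClass {δ : ℝ} {θ : ℝ → ℝ} (hθ : IsTest θ) (h0 : ∀ x, 0 ≤ θ x)
    (hs : tsupport θ ⊆ Set.Ioo 0 (δ / 2)) {M : ℝ} (hM : 0 ≤ M) :
    ∃ ξ : ℝ → ℝ, MemXClass δ ξ ∧ ∀ x, deriv ξ x = M * (θ x * θ x) := by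
  have hcont := hθ.continuous
  have hd : ∀ x, HasDerivAt (fun x => ∫ y in (0 : ℝ)..x, M * (θ y * θ y)) (M * (θ x * θ x)) x :=
    fun x => (by fun_prop : Continuous fun y => M * (θ y * θ y)).integral_hasStrictDerivAt 0 x
      |>.hasDerivAt
  have hde : deriv (fun x => ∫ y in (0 : ℝ)..x, M * (θ y * θ y)) = fun x => M * (θ x * θ x) :=
    funext fun x => (hd x).deriv
  have hz : ∀ x ≤ 0, θ x = 0 := fun x hx => image_eq_zero_of_notMem_tsupport fun h =>
    absurd (hs h).1 (not_lt.2 hx)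
  refine ⟨_, ⟨?_, ?_, ?_, ?_, ?_⟩, fun x => (hd x).deriv⟩
  · refine contDiff_infty_iff_deriv.2 ⟨fun x => (hd x).differentiableAt, ?_⟩
    rw [hde]
    exact contDiff_const.mul (hθ.1.mul hθ.1)
  · refine closure_minimal (fun x hx => ?_) isClosed_Ici
    by_contra hc
    refine hx ?_
    rw [Set.mem_Ici, not_le] at hc
    refine intervalIntegral.integral_zero_ae (.of_forall fun y hy => ?_)
    rw [Set.uIoc_of_ge hc.le] at hy
    simp [hz y hy.2]
  · rw [hde]
    refine (closure_mono fun x hx => ?_).trans hs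
    rw [Function.mem_support] at hx ⊢
    exact fun h => hx (by simp [h])
  · intro x
    rw [hde]
    have := h0 x
    positivity
  · rw [hde]
    have : (fun x => √(M * (θ x * θ x))) = fun x => √M * θ x := by
      ext x
      rw [Real.sqrt_mul hM, Real.sqrt_mul_self (h0 x)]
    rw [this]
    exact contDiff_const.mul hθ.1

/-- Only the scaling matters: scalars commute with everything. -/
theorem adPow_scaled {𝒜 : Type*} [Ring 𝒜] [Algebra ℝ 𝒜] (Φ A : 𝒜) (c α : ℝ) (k : ℕ) :
    adPow (c • (Φ - α • (1 : 𝒜))) k A = c ^ k • adPow Φ k A := by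
  induction k with
  | zero => simp [adPow]
  | succ k ih =>
    rw [adPow, ih]
    simp only [adPow, smul_mul_assoc, mul_smul_comm, sub_mul, mul_sub, one_mul, mul_one,
      smul_sub, smul_smul, pow_succ']
    rw [show c ^ k * (c * α) = c * α * c ^ k by ring, show c ^ k * c = c * c ^ k by ring]
    abel

/-- With `Ψ = (Φ - α)/s`, the operator `g((Φ - α)/s)` of the statement is `g(Ψ)`. This also holds
for `s = 0`, where both sides use `g 0`. -/
theorem cfc_scaled {𝒜 : Type*} [CStarAlgebra 𝒜] {Φ : 𝒜} (hΦ : IsSelfAdjoint Φ) {g : ℝ → ℝ}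
    (hg : Continuous g) (s α : ℝ) :
    cfc (fun x : ℝ => g ((x - α) / s)) Φ = cfc g (s⁻¹ • (Φ - α • (1 : 𝒜))) := by
  have h : cfc (fun x : ℝ => s⁻¹ * (x - α)) Φ = s⁻¹ • (Φ - α • (1 : 𝒜)) := by
    rw [cfc_const_mul s⁻¹ (fun x : ℝ => x - α) Φ (by fun_prop),
      cfc_sub (fun x : ℝ => x) (fun _ => α) Φ (by fun_prop) (by fun_prop), cfc_id' ℝ Φ,
      cfc_const α Φ, Algebra.algebraMap_eq_smul_one]
  rw [← h, ← cfc_comp' g (fun x : ℝ => s⁻¹ * (x - α)) Φ (by fun_prop) (by fun_prop)]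
  congr 1
  ext x
  rw [div_eq_inv_mul]

/-! ### From norm bounds to order bounds -/

section Hilbert

variable {𝓗 : Type*} [NormedAddCommGroup 𝓗] [InnerProductSpace ℂ 𝓗] [CompleteSpace 𝓗]

theorem isPositive_of_re_nonneg {T : 𝓗 →L[ℂ] 𝓗} (hT : IsSelfAdjoint T)
    (h : ∀ x, 0 ≤ (inner ℂ (T x) x).re) : T.IsPositive :=
  ContinuousLinearMap.isPositive_def'.2 ⟨hT, h⟩

/-- If a self-adjoint operator `T` is, up to a scalar factor of modulus at most `1`, a sum of
sandwiched operators `Q Gₖ Q` and an error `E`, then `-T ≤ ∑ ‖Gₖ‖ Q² + ‖E‖`. Neither the `Gₖ` nor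
`E` need be self-adjoint. -/
theorem isPositive_of_decomposition {ι : Type*} (S : Finset ι) {T Q E : 𝓗 →L[ℂ] 𝓗}
    {G : ι → 𝓗 →L[ℂ] 𝓗} (hT : IsSelfAdjoint T) (hQ : IsSelfAdjoint Q) {z : ℂ} (hz : ‖z‖ ≤ 1)
    (hTE : T = z • (∑ k ∈ S, Q * G k * Q + E)) {c : ι → ℝ} {e : ℝ}
    (hG : ∀ k ∈ S, ‖G k‖ ≤ c k) (hE : ‖E‖ ≤ e) :
    (∑ k ∈ S, c k • (Q * Q) + e • (1 : 𝓗 →L[ℂ] 𝓗) + T).IsPositive := by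
  refine isPositive_of_re_nonneg ?_ fun x => ?_
  · refine (IsSelfAdjoint.add ?_ ?_).add hT
    · refine isSelfAdjoint_sum _ fun k _ => IsSelfAdjoint.smul (.all _) ?_
      rw [isSelfAdjoint_iff, star_mul, hQ.star_eq]
    · exact IsSelfAdjoint.smul (.all _) (.one _)
  · have hQs : ∀ y w : 𝓗, inner ℂ (Q y) w = inner ℂ y (Q w) := hQ.isSymmetric
    have hsm : ∀ (r : ℝ) (y w : 𝓗), inner ℂ (r • y) w = (r : ℂ) * inner ℂ y w := fun r y w => by
      rw [← Complex.coe_smul, inner_smul_left, Complex.conj_ofReal]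
    have hQQ : inner ℂ (Q (Q x)) x = ((‖Q x‖ ^ 2 : ℝ) : ℂ) := by
      rw [hQs, inner_self_eq_norm_sq_to_K]; norm_cast
    have hxx : inner ℂ x x = ((‖x‖ ^ 2 : ℝ) : ℂ) := by
      rw [inner_self_eq_norm_sq_to_K]; norm_cast
    have hTx : ‖inner ℂ (T x) x‖ ≤ ∑ k ∈ S, c k * ‖Q x‖ ^ 2 + e * ‖x‖ ^ 2 := by
      rw [hTE]
      simp only [smul_apply, inner_smul_left, norm_mul, RCLike.norm_conj,
        add_apply, sum_apply, inner_add_left, sum_inner,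
        mul_apply_eq_comp, hQs]
      refine (mul_le_of_le_one_left (norm_nonneg _) hz).trans ?_
      refine (norm_add_le _ _).trans (add_le_add ((norm_sum_le _ _).trans
        (Finset.sum_le_sum fun k hk => ?_)) ?_)
      · calc _ ≤ ‖G k (Q x)‖ * ‖Q x‖ := norm_inner_le_norm _ _
          _ ≤ (c k * ‖Q x‖) * ‖Q x‖ := by
            gcongr
            exact (G k).le_of_opNorm_le (hG k hk) _
          _ = _ := by ring
      · calc _ ≤ ‖E x‖ * ‖x‖ := norm_inner_le_norm _ _
          _ ≤ (e * ‖x‖) * ‖x‖ := by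
            gcongr
            exact E.le_of_opNorm_le hE _
          _ = _ := by ring
    have h1 := (abs_le.1 ((Complex.abs_re_le_norm _).trans hTx)).1
    have h2 : (inner ℂ ((∑ k ∈ S, c k • (Q * Q) + e • (1 : 𝓗 →L[ℂ] 𝓗) + T) x) x).re =
        ∑ k ∈ S, c k * ‖Q x‖ ^ 2 + e * ‖x‖ ^ 2 + (inner ℂ (T x) x).re := by
      simp only [smul_apply, add_apply,
        sum_apply, inner_add_left, sum_inner, mul_apply_eq_comp,
        one_apply_eq_self, hsm, hQQ, hxx, Complex.add_re, Complex.re_sum,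
        Complex.re_ofReal_mul, Complex.ofReal_re]
    rw [h2]
    linarith

end Hilbert

/-! ### The expansion of the Hamiltonian part -/

/-- symmetrized commutator expansion of the Hamiltonian part, bounded case:
for `n ≥ 1`, `δ > 0` and `χ ∈ 𝒳_δ` there are `C > 0` and `ξ^2, …, ξ^n ∈ 𝒳_δ`, depending only
on `n, χ`, such that for all bounded self-adjoint `H, Φ`, all `s > 0` and `α ∈ ℝ`, with
`μ = max_{2 ≤ k ≤ n+1} (1 + ‖ad_Φ^k(H)‖²)`, the operator
`Rem = i[H, χ_s] − s⁻¹ u_s (i[H,Φ]) u_s` satisfies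
`± Rem ≤ μ Σ_{k=2}^n s^{−k} (ξ^k)′_s + C μ s^{−(n+1)} I` in the Loewner order
(`S ≤ T` iff `T − S` is a positive operator). -/
theorem symmetrized_commutator_expansion (n : ℕ) (hn : 1 ≤ n) (δ : ℝ) (hδ : 0 < δ)
    (χ : ℝ → ℝ) (hχ : MemXClass δ χ) :
    ∃ C > (0 : ℝ), ∃ ξ : ℕ → ℝ → ℝ, (∀ k, 2 ≤ k → k ≤ n → MemXClass δ (ξ k)) ∧
      ∀ (𝓗 : Type) [NormedAddCommGroup 𝓗] [InnerProductSpace ℂ 𝓗] [CompleteSpace 𝓗]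
        (Hop Φ : 𝓗 →L[ℂ] 𝓗), IsSelfAdjoint Hop → IsSelfAdjoint Φ →
        ∀ s : ℝ, 0 < s → ∀ α : ℝ,
          let μ : ℝ := (Finset.Icc 2 (n + 1)).sup' (Finset.nonempty_Icc.mpr (by omega))
            fun k => 1 + ‖adPow Φ k Hop‖ ^ 2
          let χs : 𝓗 →L[ℂ] 𝓗 := cfc (fun x : ℝ => χ ((x - α) / s)) Φ
          let us : 𝓗 →L[ℂ] 𝓗 := cfc (fun x : ℝ => Real.sqrt (deriv χ ((x - α) / s))) Φ
          let Rem : 𝓗 →L[ℂ] 𝓗 := Complex.I • (Hop * χs - χs * Hop)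
            - s⁻¹ • (us * (Complex.I • (Hop * Φ - Φ * Hop)) * us)
          let Bd : 𝓗 →L[ℂ] 𝓗 := μ • (∑ k ∈ Finset.Icc 2 n,
              s⁻¹ ^ k • cfc (fun x : ℝ => deriv (ξ k) ((x - α) / s)) Φ)
            + (C * μ * s⁻¹ ^ (n + 1)) • (1 : 𝓗 →L[ℂ] 𝓗)
          (Bd - Rem).IsPositive ∧ (Bd + Rem).IsPositive := by
  obtain ⟨hχs, hχ0, hχK, hχn, hχu⟩ := hχ
  set K : Set ℝ := tsupport (deriv χ) with hKdef
  have hKcl : IsClosed K := isClosed_tsupport _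
  have hKc : IsCompact K := isCompact_Icc.of_isClosed_subset hKcl
    (hχK.trans Set.Ioo_subset_Icc_self)
  have h0 : ∀ x < 0, χ x = 0 := fun x hx => image_eq_zero_of_notMem_tsupport fun h =>
    absurd (hχ0 h) (not_le.2 hx)
  have hdz : ∀ x ∉ K, deriv χ x = 0 := fun x hx => image_eq_zero_of_notMem_tsupport hx
  have hb : ∀ x, δ / 2 ≤ x → χ x = χ (δ / 2) := by
    intro x hx
    refine constant_of_has_deriv_right_zero hχs.continuous.continuousOn (fun y hy => ?_) x
      (Set.right_mem_Icc.2 hx)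
    have := ((hχs.differentiable (by simp)) y).hasDerivAt
    rw [hdz y fun h => absurd (hχK h).2 (not_lt.2 hy.1)] at this
    exact this.hasDerivWithinAt
  have hd : IsTest (deriv χ) := ⟨(contDiff_infty_iff_deriv.1 hχs).2, hKc⟩
  set u : ℝ → ℝ := fun x => √(deriv χ x) with hudef
  have huz : ∀ x ∉ K, u x = 0 := fun x hx => by simp [hudef, hdz x hx]
  have hu : IsTest u := ⟨hχu, HasCompactSupport.intro hKc huz⟩
  have huu : ∀ x, u x * u x = deriv χ x := fun x => Real.mul_self_sqrt (hχn x)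
  obtain ⟨θ, hθ, hθn, hθs, hθ1⟩ := exists_theta hδ hKcl hχK
  -- For `k ≥ 2` the coefficients `F_k` are supported in `K`: both `χ⁽ᵏ⁾` and `u` are.
  have hcz : ∀ k, 2 ≤ k → ∀ x ∉ K, coef χ u k x = 0 := by
    intro k hk x hx
    obtain ⟨l, rfl⟩ : ∃ l, k = l + 1 := ⟨k - 1, by omega⟩
    have : iteratedDeriv (l + 1) χ x = 0 := image_eq_zero_of_notMem_tsupport fun h =>
      hx (tsupport_iteratedDeriv_succ_subset l h)
    simp [coef, this, huz x hx]
  have hθF : ∀ k, 2 ≤ k → ∀ x, coef χ u k x * θ x = coef χ u k x := by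
    intro k hk x
    by_cases hx : x ∈ K
    · rw [(hθ1 x hx).self_of_nhds, mul_one]
    · rw [hcz k hk x hx, zero_mul]
  have hθF' : ∀ k, 2 ≤ k → ∀ j, 1 ≤ j → ∀ x, iteratedDeriv j θ x * coef χ u k x = 0 := by
    intro k hk j hj x
    by_cases hx : x ∈ K
    · rw [(hθ1 x hx).iteratedDeriv_eq, iteratedDeriv_const, if_neg (by omega), zero_mul]
    · rw [hcz k hk x hx, mul_zero]
  have hcc : ∀ k, Continuous (coef χ u k) := by
    intro k
    have h1 : Continuous (iteratedDeriv k χ) :=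
      hχs.continuous_iteratedDeriv k (by exact_mod_cast le_top)
    have h2 := (hu.iteratedDeriv (k - 1)).continuous
    have h3 := hu.continuous
    unfold coef
    fun_prop
  obtain ⟨M₀, hM₀⟩ := hu.continuous.bounded_above_of_compact_support hu.2
  have hMex : ∀ k, ∃ m : ℝ, 2 ≤ k → ∀ x, |coef χ u k x| ≤ m := by
    intro k
    by_cases hk : 2 ≤ k
    · obtain ⟨m, hm⟩ := (hcc k).bounded_above_of_compact_support
        (HasCompactSupport.intro hKc (hcz k hk))
      exact ⟨m, fun _ => hm⟩
    · exact ⟨0, fun h => absurd h hk⟩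
  choose M hM using hMex
  have hM0 : ∀ k, 2 ≤ k → 0 ≤ M k := fun k hk => (abs_nonneg _).trans (hM k hk 0)
  have hξex : ∀ k, ∃ ξ : ℝ → ℝ, 2 ≤ k →
      MemXClass δ ξ ∧ ∀ x, deriv ξ x = M k * (θ x * θ x) := by
    intro k
    by_cases hk : 2 ≤ k
    · obtain ⟨ξ, hξ⟩ := exists_memXClass hθ hθn hθs (hM0 k hk)
      exact ⟨ξ, fun _ => hξ⟩
    · exact ⟨0, fun h => absurd h hk⟩
  choose ξ hξ using hξex
  set C : ℝ := 2 * fconst (iteratedDeriv (n + 1) χ) + fconst (iteratedDeriv n u) * M₀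
        + ∑ k ∈ Finset.Icc 2 n, fconst (iteratedDeriv (n + 1 - k) θ) * M k with hC
  have hC0 : 0 ≤ C := by
    have h1 := fconst_nonneg (iteratedDeriv (n + 1) χ)
    have h2 := mul_nonneg (fconst_nonneg (iteratedDeriv n u)) ((norm_nonneg _).trans (hM₀ 0))
    have h3 : 0 ≤ ∑ k ∈ Finset.Icc 2 n, fconst (iteratedDeriv (n + 1 - k) θ) * M k :=
      Finset.sum_nonneg fun k hk =>
        mul_nonneg (fconst_nonneg _) (hM0 k (Finset.mem_Icc.1 hk).1)
    rw [hC]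
    linarith
  -- `C` itself may vanish (for `χ = 0`), whereas the constant has to be positive.
  refine ⟨C + 1, by linarith, ξ, fun k hk _ => (hξ k hk).1, ?_⟩
  intro 𝓗 _ _ _ Hop Φ hH hΦ s hs α μ χs us Rem Bd
  have hs' : 0 ≤ s⁻¹ := (inv_pos.2 hs).le
  set Ψ : 𝓗 →L[ℂ] 𝓗 := s⁻¹ • (Φ - α • (1 : 𝓗 →L[ℂ] 𝓗)) with hΨdef
  have hΨ : IsSelfAdjoint Ψ :=
    IsSelfAdjoint.smul (.all _) (hΦ.sub (IsSelfAdjoint.smul (.all _) (.one _)))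
  have hμ : ∀ k, 2 ≤ k → k ≤ n + 1 → ‖adPow Φ k Hop‖ ≤ μ := by
    intro k h2 hk
    have h1 : 1 + ‖adPow Φ k Hop‖ ^ 2 ≤ μ :=
      Finset.le_sup' (fun k => 1 + ‖adPow Φ k Hop‖ ^ 2) (Finset.mem_Icc.2 ⟨h2, hk⟩)
    -- `y ≤ 1 + y²`
    nlinarith [sq_nonneg (‖adPow Φ k Hop‖ - 1), sq_nonneg (‖adPow Φ k Hop‖)]
  have hμ0 : 0 ≤ μ := (norm_nonneg _).trans (hμ 2 le_rfl (by omega))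
  have hB : ∀ k, 2 ≤ k → k ≤ n + 1 → ‖adPow Ψ k Hop‖ ≤ μ * s⁻¹ ^ k := by
    intro k h2 hk
    rw [hΨdef, adPow_scaled, norm_smul, norm_pow, Real.norm_of_nonneg hs', mul_comm]
    gcongr
    exact hμ k h2 hk
  have eχ : χs = cfc χ Ψ := cfc_scaled hΦ hχs.continuous s α
  have eu : us = cfc u Ψ := cfc_scaled hΦ hu.continuous s α
  have hχsa : IsSelfAdjoint χs := cfc_predicate _ _
  have husa : IsSelfAdjoint us := cfc_predicate _ _
  set Q : 𝓗 →L[ℂ] 𝓗 := cfc θ Ψ with hQ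
  have hQsa : IsSelfAdjoint Q := cfc_predicate _ _
  set G : ℕ → 𝓗 →L[ℂ] 𝓗 := fun k => adPow Ψ k Hop * cfc (coef χ u k) Ψ with hG
  set D : 𝓗 →L[ℂ] 𝓗 := (cfc χ Ψ * Hop - Hop * cfc χ Ψ) - cfc u Ψ * adPow Ψ 1 Hop * cfc u Ψ
    with hD
  set E : 𝓗 →L[ℂ] 𝓗 := D - ∑ k ∈ Finset.Icc 2 n, Q * G k * Q with hE
  have hEn : ‖E‖ ≤ (C + 1) * μ * s⁻¹ ^ (n + 1) := by
    have h1 : ‖E‖ ≤ C * ‖adPow Ψ (n + 1) Hop‖ :=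
      symmetrized_expansion hχs hd h0 hb hu hθ huu hθF hθF' hM₀ hM hΨ Hop hn
    calc _ ≤ C * (μ * s⁻¹ ^ (n + 1)) := h1.trans (by gcongr; exact hB _ (by omega) le_rfl)
      _ ≤ (C + 1) * (μ * s⁻¹ ^ (n + 1)) := by gcongr; linarith
      _ = _ := by ring
  have hGn : ∀ k ∈ Finset.Icc 2 n, ‖G k‖ ≤ μ * (s⁻¹ ^ k * M k) := by
    intro k hk
    obtain ⟨hk2, hkn⟩ := Finset.mem_Icc.1 hk
    calc _ ≤ ‖adPow Ψ k Hop‖ * ‖cfc (coef χ u k) Ψ‖ := norm_mul_le _ _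
      _ ≤ (μ * s⁻¹ ^ k) * M k := by
        gcongr
        · exact hB k hk2 (by omega)
        · exact norm_cfc_le (hM0 k hk2) fun x _ => hM k hk2 x
      _ = _ := by ring
  -- `[H, χ_s] = -[χ_s, H]`, hence the factor `-i`; the factor `s⁻¹` of the subtracted term is
  -- absorbed by `ad_Ψ(H) = s⁻¹ ad_Φ(H)`.
  have hRem : Rem = (-Complex.I) • (∑ k ∈ Finset.Icc 2 n, Q * G k * Q + E) := by
    rw [hE, add_sub_cancel, hD, ← eχ, ← eu, hΨdef, adPow_scaled]
    simp only [Rem, adPow, pow_one, smul_sub, mul_sub, sub_mul, mul_smul_comm, smul_mul_assoc,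
      neg_smul, smul_comm Complex.I s⁻¹]
    abel
  have hRemsa : IsSelfAdjoint Rem := by
    have e1 : star Complex.I = -Complex.I := Complex.conj_I
    simp only [isSelfAdjoint_iff, Rem, star_sub, star_smul, star_mul, hH.star_eq, hΦ.star_eq,
      hχsa.star_eq, husa.star_eq, e1, star_trivial, mul_assoc, smul_sub, neg_smul, mul_sub, sub_mul,
      smul_mul_assoc, mul_smul_comm, smul_neg]
    abel
  have hBd : Bd = ∑ k ∈ Finset.Icc 2 n, (μ * (s⁻¹ ^ k * M k)) • (Q * Q)
      + ((C + 1) * μ * s⁻¹ ^ (n + 1)) • (1 : 𝓗 →L[ℂ] 𝓗) := by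
    simp only [Bd, Finset.smul_sum]
    congr 1
    refine Finset.sum_congr rfl fun k hk => ?_
    have hk2 := (Finset.mem_Icc.1 hk).1
    have hθc := hθ.continuous
    have h1 : cfc (fun x : ℝ => deriv (ξ k) ((x - α) / s)) Φ = M k • (Q * Q) := by
      simp only [(hξ k hk2).2]
      rw [cfc_scaled hΦ (g := fun x => M k * (θ x * θ x)) (by fun_prop) s α,
        cfc_const_mul (M k) (fun x => θ x * θ x) _ (by fun_prop),
        cfc_mul θ θ _ (by fun_prop) (by fun_prop)]
    rw [h1, smul_smul, smul_smul]
    congr 1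
    ring
  rw [hBd]
  constructor
  · rw [sub_eq_add_neg]
    refine isPositive_of_decomposition _ hRemsa.neg hQsa (z := Complex.I) (by simp) ?_ hGn hEn
    rw [hRem, neg_smul, neg_neg]
  · exact isPositive_of_decomposition _ hRemsa hQsa (z := -Complex.I) (by simp) hRem hGn hEn
end
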